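/- Let Γ be a Shilla distance-regular graph with b = b(Γ) that is Q-polynomial with respect to θ₁ = a₃. Then θ₃ = -b - b(b-1)b₂/(b₂+c₂); in particular all eigenvalues of Γ are integral, b₂ + c₂ divides b(b-1)b₂, and -b² + 1 ≤ θ₃ ≤ -b²(b+3)/(3b+1). -/

import Mathlib

open Finset SimpleGraph

/-- `G` is a distance-regular graph with diameter `D` and intersection numbers
`b i`, `c i`, `a i` (so valency `k = b 0` and `a i = k - b i - c i`). -/
structure IsDRG {V : Type*} [Fintype V] (G : SimpleGraph V) (D : ℕ)
    (b c a : ℕ → ℕ) : Prop where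
  connected : G.Connected
  le_diam : ∀ x y : V, G.dist x y ≤ D
  exists_diam : ∃ x y : V, G.dist x y = D
  card_b : ∀ i, i ≤ D → ∀ x y : V, G.dist x y = i →
      Nat.card {z : V | G.Adj y z ∧ G.dist x z = i + 1} = b i
  card_c : ∀ i, i ≤ D → ∀ x y : V, G.dist x y = i →
      Nat.card {z : V | G.Adj y z ∧ G.dist x z = i - 1} = c i
  card_a : ∀ i, i ≤ D → ∀ x y : V, G.dist x y = i →
      Nat.card {z : V | G.Adj y z ∧ G.dist x z = i} = a i

/-- `θ` is an eigenvalue of the adjacency matrix of `G`. -/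
def IsEig {V : Type*} [Fintype V] [DecidableEq V] (G : SimpleGraph V)
    [DecidableRel G.Adj] (θ : ℝ) : Prop :=
  ∃ v : V → ℝ, v ≠ 0 ∧ (G.adjMatrix ℝ).mulVec v = θ • v

/-- `θ` is the second largest eigenvalue of `G` (`k` being the largest). -/
def IsSecondLargestEig {V : Type*} [Fintype V] [DecidableEq V] (G : SimpleGraph V)
    [DecidableRel G.Adj] (k θ : ℝ) : Prop :=
  IsEig G θ ∧ θ < k ∧ ∀ η : ℝ, IsEig G η → η ≠ k → η ≤ θ

/-- `θ` is the smallest eigenvalue of `G`. -/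
def IsSmallestEig {V : Type*} [Fintype V] [DecidableEq V] (G : SimpleGraph V)
    [DecidableRel G.Adj] (θ : ℝ) : Prop :=
  IsEig G θ ∧ ∀ η : ℝ, IsEig G η → θ ≤ η

/-- The multiplicity of `θ` as an eigenvalue of the adjacency matrix of `G`. -/
noncomputable def eigMult {V : Type*} [Fintype V] [DecidableEq V] (G : SimpleGraph V)
    [DecidableRel G.Adj] (θ : ℝ) : ℕ :=
  Module.finrank ℝ ↥(Module.End.eigenspace (Matrix.toLin' (G.adjMatrix ℝ)) θ)

/-- A Shilla distance-regular graph: diameter `3` and second largest eigenvalue `a 3`. -/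
structure IsShilla {V : Type*} [Fintype V] [DecidableEq V] (G : SimpleGraph V)
    [DecidableRel G.Adj] (b c a : ℕ → ℕ) : Prop where
  drg : IsDRG G 3 b c a
  second : IsSecondLargestEig G (b 0) ((a 3 : ℝ))

/-- The standard sequence `u₀, u₁, u₂, u₃` associated to the eigenvalue `θ` of a
distance-regular graph of diameter `3` with intersection numbers `b, c, a`. -/
noncomputable def stdSeq (b c a : ℕ → ℕ) (θ : ℝ) : ℕ → ℝ := fun l =>
  match l with
  | 0 => 1
  | 1 => θ / b 0
  | 2 => ((θ - a 1) * (θ / b 0) - c 1) / b 1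
  | 3 => ((θ - a 2) * (((θ - a 1) * (θ / b 0) - c 1) / b 1) - c 2 * (θ / b 0)) / b 2
  | _ => 0

/-- The number `k_l` of vertices at distance `l` from a fixed vertex, for a
distance-regular graph of diameter `3`. -/
noncomputable def kdist (b c : ℕ → ℕ) : ℕ → ℝ := fun l =>
  match l with
  | 0 => 1
  | 1 => b 0
  | 2 => b 0 * b 1 / c 2
  | 3 => b 0 * b 1 * b 2 / (c 2 * c 3)
  | _ => 0

/-- The Krein parameter `q^i_{11}` of a distance-regular graph of diameter `3` with `n`
vertices, where `m1` is the multiplicity of `θ1` and `θi` is the `i`-th eigenvalue: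
`q^i_{11} = (m1 * m1 / n) * Σ_l k_l u_l(θ1)^2 u_l(θi)`. -/
noncomputable def krein11 (n m1 : ℕ) (b c a : ℕ → ℕ) (θ1 θi : ℝ) : ℝ :=
  ((m1 : ℝ) * m1 / n) *
    ∑ l ∈ Finset.range 4, kdist b c l * (stdSeq b c a θ1 l) ^ 2 * stdSeq b c a θi l

/-- For a distance-regular graph of diameter `3` with eigenvalues
`k > θ1 > θ2 > θ3`, being `Q`-polynomial with respect to `θ1` is equivalent to
`q²₁₁ = 0` or `q³₁₁ = 0`. -/
def IsQPolyTheta1 (n m1 : ℕ) (b c a : ℕ → ℕ) (θ1 θ2 θ3 : ℝ) : Prop :=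
  krein11 n m1 b c a θ1 θ2 = 0 ∨ krein11 n m1 b c a θ1 θ3 = 0

/-!
Fix a vertex `x` and an eigenvector `v` with eigenvalue `θ`, and let `Sⱼ` be the sum of `v` over
the vertices at distance `j` from `x`. The adjacency matrix acts tridiagonally on the `Sⱼ`, by the
same recurrence as for `kⱼ uⱼ(θ)`, so that `Sⱼ = kⱼ uⱼ(θ) v(x)`, and the `Sⱼ` add up to `0` unless
`θ` is the valency `k`.

For `θ = a₃` this gives `S₂ = 0` and hence `k = β a₃`. For the remaining eigenvalues `θ ≠ k, a₃` it
gives `c₂ S₂ = (θ + β)(θ - a₃) v(x)` and `c₂ S₃ = b₂ (θ + β) v(x)`, and the vanishing of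
`S₀ + S₁ + S₂ + S₃` says that `y = θ + β` is a root of the monic integral quadratic
`y² = (a₃ + β - b₂ - c₂) y + (β - 1) c₂`. Its roots have opposite signs, so `θ₃ < -β < θ₂`.

The Krein parameter at `θ` vanishes exactly when `(θ + β)(b₂ + c₂) = -β(β - 1) b₂`. This forces
`θ + β < 0`, which singles out `θ₃` and determines it. Then `θ₃ + β` is rational and an algebraic
integer, so it is an integer; this gives the divisibility, the integrality of `θ₂`, and the lower
bound. The upper bound comes from `p³₃₃ ≥ 0`, where `p³₃₃` is computed by evaluating `S₃` on the
eigenvector `w ↦ u(d(y, w))` for `a₃`, with `d(x, y) = 3`.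
-/

section Sphere

variable {V R : Type*} {G : SimpleGraph V}

/-- The sum of the function `v` over the sphere `Γⱼ(x)` of vertices at distance `j` from `x`. For
an eigenvector `v` with `v x = 1` this is the number `kⱼ uⱼ` of the standard theory. -/
noncomputable def sphereSum [Fintype V] [AddCommMonoid R] (G : SimpleGraph V) (v : V → R) (x : V)
    (j : ℕ) : R :=
  ∑ w with G.dist x w = j, v w

theorem sphereSum_zero [Fintype V] [AddCommMonoid R] (hG : G.Connected) (v : V → R) (x : V) :
    sphereSum G v x 0 = v x := by
  classical
  simp [sphereSum, hG.dist_eq_zero_iff, Finset.filter_eq]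

theorem sphereSum_one [Fintype V] [NonAssocSemiring R] [DecidableRel G.Adj] (v : V → R) (x : V) :
    sphereSum G v x 1 = (G.adjMatrix R).mulVec v x := by
  simp [sphereSum, adjMatrix_mulVec_apply, neighborFinset_eq_filter]

theorem exists_adj_dist_eq_succ (hG : G.Connected) {x y : V} {i : ℕ} (hi : i < G.dist x y) :
    ∃ u w : V, G.Adj u w ∧ G.dist x u = i ∧ G.dist x w = i + 1 := by
  obtain ⟨p, hp⟩ := hG.exists_walk_length_eq_dist x y
  have dist_getVert : ∀ j ≤ p.length, G.dist x (p.getVert j) = j := fun j hj => by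
    have hle := (dist_le (p.take j)).trans_eq (p.take_length j)
    have hge := (dist_le (p.drop j)).trans_eq (p.drop_length j)
    have htri := hG.dist_triangle (u := x) (v := p.getVert j) (w := y)
    omega
  exact ⟨p.getVert i, p.getVert (i + 1), p.adj_getVert_succ (hp ▸ hi),
    dist_getVert i (by omega), dist_getVert (i + 1) (by omega)⟩

theorem natCard_adj_dist_eq [Fintype V] [DecidableRel G.Adj] (x y : V) (j : ℕ) :
    Nat.card {z : V | G.Adj y z ∧ G.dist x z = j} = #{z ∈ G.neighborFinset y | G.dist x z = j} := by
  rw [Nat.card_eq_fintype_card, Fintype.card_subtype]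
  congr 1
  ext z
  simp

end Sphere

namespace IsDRG

variable {V R : Type*} [Fintype V] {G : SimpleGraph V} {D : ℕ} {b c a : ℕ → ℕ}

theorem a_zero (h : IsDRG G D b c a) : a 0 = 0 := by
  obtain ⟨x, -, -⟩ := h.exists_diam
  rw [← h.card_a 0 D.zero_le x x dist_self, Nat.card_eq_zero]
  exact .inl ⟨fun ⟨z, hadj, hdist⟩ => hadj.ne (h.connected.dist_eq_zero_iff.1 hdist)⟩

theorem c_zero (h : IsDRG G D b c a) : c 0 = 0 := by
  obtain ⟨x, -, -⟩ := h.exists_diam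
  rw [← h.card_c 0 D.zero_le x x dist_self]
  exact (h.card_a 0 D.zero_le x x dist_self).trans h.a_zero

theorem b_diam (h : IsDRG G D b c a) : b D = 0 := by
  obtain ⟨x, y, hxy⟩ := h.exists_diam
  rw [← h.card_b D le_rfl x y hxy, Nat.card_eq_zero]
  exact .inl ⟨fun ⟨z, _, hdist⟩ => (h.le_diam x z).not_gt (by omega)⟩

theorem b_pos (h : IsDRG G D b c a) {i : ℕ} (hi : i < D) : 0 < b i := by
  obtain ⟨x, y, hxy⟩ := h.exists_diam
  obtain ⟨u, w, huw, hu, hw⟩ := exists_adj_dist_eq_succ h.connected (hxy ▸ hi)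
  rw [← h.card_b i hi.le x u hu, Nat.card_pos_iff]
  exact ⟨⟨w, huw, hw⟩, inferInstance⟩

theorem c_succ_pos (h : IsDRG G D b c a) {i : ℕ} (hi : i < D) : 0 < c (i + 1) := by
  obtain ⟨x, y, hxy⟩ := h.exists_diam
  obtain ⟨u, w, huw, hu, hw⟩ := exists_adj_dist_eq_succ h.connected (hxy ▸ hi)
  rw [← h.card_c (i + 1) hi x w hw, Nat.card_pos_iff]
  exact ⟨⟨u, huw.symm, hu⟩, inferInstance⟩

theorem c_one (h : IsDRG G D b c a) (hD : 0 < D) : c 1 = 1 := by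
  obtain ⟨x, y, hxy⟩ := h.exists_diam
  obtain ⟨u, w, huw, -, -⟩ := exists_adj_dist_eq_succ h.connected (hxy ▸ hD)
  rw [← h.card_c 1 hD u w (dist_eq_one_iff_adj.2 huw), Nat.card_eq_one_iff_unique]
  refine ⟨⟨fun s t => Subtype.ext ?_⟩, ⟨⟨u, huw.symm, dist_self⟩⟩⟩
  exact (h.connected.dist_eq_zero_iff.1 s.2.2).symm.trans (h.connected.dist_eq_zero_iff.1 t.2.2)

theorem sphereSum_eq_zero [AddCommMonoid R] (h : IsDRG G D b c a) (v : V → R) (x : V) {j : ℕ}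
    (hj : D < j) : sphereSum G v x j = 0 := by
  rw [sphereSum, Finset.filter_false_of_mem fun w _ => ((h.le_diam x w).trans_lt hj).ne,
    Finset.sum_empty]

theorem sum_sphereSum [AddCommMonoid R] (h : IsDRG G D b c a) (v : V → R) (x : V) :
    ∑ j ∈ range (D + 1), sphereSum G v x j = ∑ w, v w :=
  Finset.sum_fiberwise_of_maps_to (fun w _ => Finset.mem_range_succ_iff.2 (h.le_diam x w)) v

theorem sphereSum_comp_dist [NonAssocSemiring R] (h : IsDRG G D b c a) (f : ℕ → R) (x y : V)
    (j : ℕ) :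
    sphereSum G (fun w => f (G.dist y w)) x j =
      ∑ i ∈ range (D + 1), #{w | G.dist x w = j ∧ G.dist y w = i} * f i := by
  rw [sphereSum, ← Finset.sum_fiberwise_of_maps_to'
    (fun w _ => Finset.mem_range_succ_iff.2 (h.le_diam y w)) f]
  simp only [Finset.filter_filter, Finset.sum_const, nsmul_eq_mul]

theorem card_sphere_inter_sphere_zero (h : IsDRG G D b c a) (x y : V) :
    #{w | G.dist x w = G.dist x y ∧ G.dist y w = 0} = 1 := by
  refine Finset.card_eq_one.2 ⟨y, ?_⟩
  ext w
  simp only [h.connected.dist_eq_zero_iff, Finset.mem_filter_univ, Finset.mem_singleton]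
  exact ⟨fun hw => hw.2.symm, fun hw => by rw [hw]; exact ⟨rfl, rfl⟩⟩

theorem card_sphere_inter_sphere_one (h : IsDRG G D b c a) (x y : V) :
    #{w | G.dist x w = G.dist x y ∧ G.dist y w = 1} = a (G.dist x y) := by
  classical
  rw [← h.card_a _ (h.le_diam x y) x y rfl, natCard_adj_dist_eq, neighborFinset_eq_filter,
    Finset.filter_filter]
  simp only [dist_eq_one_iff_adj, and_comm]

theorem sum_neighborFinset_dist [NonAssocSemiring R] [DecidableRel G.Adj] (h : IsDRG G D b c a)
    (f : ℕ → R) (x y : V) :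
    ∑ z ∈ G.neighborFinset y, f (G.dist x z) =
      b (G.dist x y) * f (G.dist x y + 1) + a (G.dist x y) * f (G.dist x y)
        + c (G.dist x y) * f (G.dist x y - 1) := by
  have hb := h.card_b _ (h.le_diam x y) x y rfl
  have ha := h.card_a _ (h.le_diam x y) x y rfl
  have hc := h.card_c _ (h.le_diam x y) x y rfl
  have hadj : ∀ z ∈ G.neighborFinset y, G.dist x z ≤ G.dist x y + 1 ∧ G.dist x y ≤ G.dist x z + 1 :=
    fun z hz => by
      have hyz : G.dist y z = 1 := dist_eq_one_iff_adj.2 ((G.mem_neighborFinset y z).1 hz)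
      have hz := h.connected.dist_triangle (u := x) (v := y) (w := z)
      have hy := h.connected.dist_triangle (u := x) (v := z) (w := y)
      rw [dist_comm (u := z)] at hy
      omega
  rw [natCard_adj_dist_eq] at hb ha hc
  rcases hxy : G.dist x y with - | i <;> rw [hxy] at hb ha hc hadj
  · obtain rfl := h.connected.dist_eq_zero_iff.1 hxy
    have hmaps : ∀ z ∈ G.neighborFinset x, G.dist x z ∈ ({1} : Finset ℕ) := fun z hz =>
      Finset.mem_singleton.2 (dist_eq_one_iff_adj.2 ((G.mem_neighborFinset x z).1 hz))
    rw [← Finset.sum_fiberwise_of_maps_to' hmaps f]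
    simp only [Finset.sum_const, nsmul_eq_mul, Finset.sum_singleton]
    simp [← hb, h.a_zero, h.c_zero]
  · have hmaps : ∀ z ∈ G.neighborFinset y, G.dist x z ∈ ({i + 2, i + 1, i} : Finset ℕ) :=
      fun z hz => by
        simp only [Finset.mem_insert, Finset.mem_singleton]
        have := hadj z hz
        omega
    rw [← Finset.sum_fiberwise_of_maps_to' hmaps f, Finset.sum_insert (by simp),
      Finset.sum_pair (by simp)]
    simp only [Finset.sum_const, nsmul_eq_mul, hb, ha, add_tsub_cancel_right] at hc ⊢
    rw [hc, add_assoc]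

theorem adjMatrix_mulVec_comp_dist [NonAssocSemiring R] [DecidableRel G.Adj] (h : IsDRG G D b c a)
    (f : ℕ → R) (x : V) :
    (G.adjMatrix R).mulVec (fun w => f (G.dist x w)) = fun w =>
      b (G.dist x w) * f (G.dist x w + 1) + a (G.dist x w) * f (G.dist x w)
        + c (G.dist x w) * f (G.dist x w - 1) := by
  funext w
  rw [adjMatrix_mulVec_apply, h.sum_neighborFinset_dist]

theorem b_add_a_add_c (h : IsDRG G D b c a) (x y : V) :
    b (G.dist x y) + a (G.dist x y) + c (G.dist x y) = b 0 := by
  classical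
  have hxy := h.sum_neighborFinset_dist (fun _ => 1) x y
  have hyy := h.sum_neighborFinset_dist (fun _ => 1) y y
  simp only [dist_self, h.a_zero, h.c_zero, mul_one, Nat.cast_id, add_zero] at hxy hyy
  exact hxy.symm.trans hyy

section Eigenvector

variable [DecidableRel G.Adj] {θ : R} {v : V → R}

theorem eigenvalue_mul_sum_dist_mul [CommSemiring R] (h : IsDRG G D b c a)
    (hv : (G.adjMatrix R).mulVec v = θ • v) (f : ℕ → R) (x : V) :
    θ * ∑ w, f (G.dist x w) * v w =
      ∑ w, (b (G.dist x w) * f (G.dist x w + 1) + a (G.dist x w) * f (G.dist x w)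
        + c (G.dist x w) * f (G.dist x w - 1)) * v w := by
  have hsymm := Matrix.dotProduct_mulVec (fun w => f (G.dist x w)) (G.adjMatrix R) v
  rwa [← Matrix.mulVec_transpose, transpose_adjMatrix, h.adjMatrix_mulVec_comp_dist, hv,
    dotProduct_smul, smul_eq_mul] at hsymm

theorem sum_eq_zero_of_ne_valency [CommRing R] [IsDomain R] (h : IsDRG G D b c a)
    (hv : (G.adjMatrix R).mulVec v = θ • v) (hθ : θ ≠ b 0) : ∑ w, v w = 0 := by
  obtain ⟨x, -, -⟩ := h.exists_diam
  have hsum := h.eigenvalue_mul_sum_dist_mul hv (fun _ => 1) x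
  simp only [one_mul, mul_one, ← Nat.cast_add, h.b_add_a_add_c, ← Finset.mul_sum] at hsum
  exact (mul_eq_mul_right_iff.1 hsum).resolve_left hθ

theorem eigenvalue_mul_sphereSum_succ [CommSemiring R] (h : IsDRG G D b c a)
    (hv : (G.adjMatrix R).mulVec v = θ • v) (x : V) (j : ℕ) :
    θ * sphereSum G v x (j + 1) = b j * sphereSum G v x j + a (j + 1) * sphereSum G v x (j + 1)
      + c (j + 2) * sphereSum G v x (j + 2) := by
  have hsum := h.eigenvalue_mul_sum_dist_mul hv (fun i => if i = j + 1 then 1 else 0) x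
  simp only [ite_mul, one_mul, zero_mul, ← Finset.sum_filter] at hsum
  rw [sphereSum, hsum]
  simp only [sphereSum, Finset.sum_filter, Finset.mul_sum, ← Finset.sum_add_distrib]
  refine Finset.sum_congr rfl fun w _ => ?_
  generalize G.dist x w = i
  rcases lt_trichotomy i (j + 1) with hi | rfl | hi
  · obtain rfl | hij := eq_or_ne i j
    · simp
    · simp [hij, hi.ne, show i ≠ j + 2 by omega, show i - 1 ≠ j + 1 by omega]
  · simp
  · obtain rfl | hij := eq_or_ne i (j + 2)
    · simp
    · simp [hij, hi.ne', show i ≠ j by omega, show i - 1 ≠ j + 1 by omega]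

theorem eigenvalue_sub_mul_sphereSum_diam [CommRing R] (h : IsDRG G (D + 1) b c a)
    (hv : (G.adjMatrix R).mulVec v = θ • v) (x : V) :
    (θ - a (D + 1)) * sphereSum G v x (D + 1) = b D * sphereSum G v x D := by
  have hrec := h.eigenvalue_mul_sphereSum_succ hv x D
  rw [h.sphereSum_eq_zero v x (Nat.lt_succ_self (D + 1)), mul_zero, add_zero] at hrec
  linear_combination hrec

end Eigenvector

end IsDRG

theorem stdSeq_zero (b c a : ℕ → ℕ) (θ : ℝ) : stdSeq b c a θ 0 = 1 := rfl

theorem stdSeq_one (b c a : ℕ → ℕ) (θ : ℝ) : stdSeq b c a θ 1 = θ / b 0 := rfl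

theorem stdSeq_two (b c a : ℕ → ℕ) (θ : ℝ) :
    stdSeq b c a θ 2 = ((θ - a 1) * stdSeq b c a θ 1 - c 1 * stdSeq b c a θ 0) / b 1 := by
  rw [stdSeq_zero, mul_one]
  rfl

theorem stdSeq_three (b c a : ℕ → ℕ) (θ : ℝ) :
    stdSeq b c a θ 3 = ((θ - a 2) * stdSeq b c a θ 2 - c 2 * stdSeq b c a θ 1) / b 2 := rfl

namespace IsDRG

variable {V : Type*} [Fintype V] {G : SimpleGraph V} [DecidableRel G.Adj] {b c a : ℕ → ℕ} {θ : ℝ}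

theorem kdist_mul_stdSeq_mul (h : IsDRG G 3 b c a) {v : V → ℝ}
    (hv : (G.adjMatrix ℝ).mulVec v = θ • v) (x : V) (l : ℕ) :
    kdist b c l * stdSeq b c a θ l * v x = sphereSum G v x l := by
  have hb0 : (b 0 : ℝ) ≠ 0 := mod_cast (h.b_pos (by norm_num)).ne'
  have hb1 : (b 1 : ℝ) ≠ 0 := mod_cast (h.b_pos (by norm_num)).ne'
  have hb2 : (b 2 : ℝ) ≠ 0 := mod_cast (h.b_pos (by norm_num)).ne'
  have hc2 : (c 2 : ℝ) ≠ 0 := mod_cast (h.c_succ_pos (by norm_num : 1 < 3)).ne'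
  have hc3 : (c 3 : ℝ) ≠ 0 := mod_cast (h.c_succ_pos (by norm_num : 2 < 3)).ne'
  have s0 : sphereSum G v x 0 = v x := sphereSum_zero h.connected v x
  have s1 : sphereSum G v x 1 = θ * v x := by rw [sphereSum_one, hv]; rfl
  have s2 := h.eigenvalue_mul_sphereSum_succ hv x 0
  have s3 := h.eigenvalue_mul_sphereSum_succ hv x 1
  norm_num only at s2 s3
  rw [s0, s1] at s2
  rw [s1] at s3
  match l with
  | 0 => simp only [kdist, stdSeq_zero, one_mul, s0]
  | 1 => rw [s1, stdSeq_one, kdist, mul_div_cancel₀ _ hb0]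
  | 2 =>
    simp only [kdist, stdSeq, h.c_one three_pos]
    field_simp
    push_cast
    linear_combination s2
  | 3 =>
    simp only [kdist, stdSeq, h.c_one three_pos]
    field_simp
    push_cast
    linear_combination c 2 * s3 + (θ - a 2) * s2
  | l + 4 => simp [kdist, h.sphereSum_eq_zero v x (show 3 < l + 4 by omega)]

theorem adjMatrix_mulVec_stdSeq (h : IsDRG G 3 b c a)
    (hlast : a 3 * stdSeq b c a θ 3 + c 3 * stdSeq b c a θ 2 = θ * stdSeq b c a θ 3) (x : V) :
    (G.adjMatrix ℝ).mulVec (fun w => stdSeq b c a θ (G.dist x w)) =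
      θ • fun w => stdSeq b c a θ (G.dist x w) := by
  have hb0 : (b 0 : ℝ) ≠ 0 := mod_cast (h.b_pos (by norm_num)).ne'
  have hb1 : (b 1 : ℝ) ≠ 0 := mod_cast (h.b_pos (by norm_num)).ne'
  have hb2 : (b 2 : ℝ) ≠ 0 := mod_cast (h.b_pos (by norm_num)).ne'
  rw [h.adjMatrix_mulVec_comp_dist]
  funext w
  have hw := h.le_diam x w
  simp only [Pi.smul_apply, smul_eq_mul]
  generalize G.dist x w = i at hw
  interval_cases i
  · simp [stdSeq, h.a_zero, h.c_zero, mul_div_cancel₀ _ hb0]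
  · simp only [stdSeq]; field_simp; ring
  · simp only [stdSeq]; field_simp; ring
  · simpa [h.b_diam] using hlast

theorem krein11_mul (h : IsDRG G 3 b c a) {v : V → ℝ} (hv : (G.adjMatrix ℝ).mulVec v = θ • v)
    (x : V) (n m : ℕ) (θ' : ℝ) :
    krein11 n m b c a θ' θ * v x =
      m * m / n * ∑ l ∈ range 4, stdSeq b c a θ' l ^ 2 * sphereSum G v x l := by
  simp only [krein11, mul_assoc, Finset.sum_mul, ← h.kdist_mul_stdSeq_mul hv, mul_left_comm]

end IsDRG

theorem eigMult_pos {V : Type*} [Fintype V] [DecidableEq V] {G : SimpleGraph V}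
    [DecidableRel G.Adj] {θ : ℝ} (h : IsEig G θ) : 0 < eigMult G θ := by
  obtain ⟨v, hv0, hv⟩ := h
  refine Module.finrank_pos_iff_exists_ne_zero.2
    ⟨⟨v, ?_⟩, fun hzero => hv0 (congrArg Subtype.val hzero)⟩
  rw [Module.End.mem_eigenspace_iff, Matrix.toLin'_apply, hv]

theorem exists_intCast_eq_of_sq_eq {K : Type*} [Field K] [CharZero K] {x : K} {m n p q : ℤ}
    (hm : m ≠ 0) (hmx : m * x = n) (hx : x ^ 2 = p * x + q) : ∃ z : ℤ, x = z := by
  obtain ⟨r, rfl⟩ : ∃ r : ℚ, x = r := by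
    refine ⟨n / m, ?_⟩
    push_cast
    rw [eq_div_iff (by exact_mod_cast hm), mul_comm, hmx]
  have hr : r ^ 2 = p * r + q := mod_cast hx
  have hint : IsIntegral ℤ r := by
    refine ⟨.X ^ 2 - .C p * .X - .C q, by monicity!, ?_⟩
    rw [Polynomial.eval₂_sub, Polynomial.eval₂_sub, Polynomial.eval₂_mul, Polynomial.eval₂_X_pow,
      Polynomial.eval₂_X, Polynomial.eval₂_C, Polynomial.eval₂_C, eq_intCast, eq_intCast]
    linear_combination hr
  obtain ⟨z, rfl⟩ := IsIntegrallyClosed.isIntegral_iff.1 hint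
  exact ⟨z, by simp⟩

namespace IsShilla

variable {V : Type*} [Fintype V] [DecidableEq V] {G : SimpleGraph V} [DecidableRel G.Adj]
  {b c a : ℕ → ℕ} {β : ℕ} {θ : ℝ}

theorem b_two_pos (hG : IsShilla G b c a) : (0 : ℝ) < b 2 :=
  mod_cast hG.drg.b_pos (by norm_num)

theorem c_two_pos (hG : IsShilla G b c a) : (0 : ℝ) < c 2 :=
  mod_cast hG.drg.c_succ_pos (i := 1) (by norm_num)

theorem sphereSum_two_eq_zero (hG : IsShilla G b c a) {v : V → ℝ}
    (hv : (G.adjMatrix ℝ).mulVec v = (a 3 : ℝ) • v) (x : V) : sphereSum G v x 2 = 0 := by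
  have hdiam := hG.drg.eigenvalue_sub_mul_sphereSum_diam hv x
  rw [sub_self, zero_mul, zero_eq_mul] at hdiam
  exact hdiam.resolve_left hG.b_two_pos.ne'

theorem sphereSum_three_eq (hG : IsShilla G b c a) {v : V → ℝ}
    (hv : (G.adjMatrix ℝ).mulVec v = (a 3 : ℝ) • v) (x : V) :
    sphereSum G v x 3 = -(a 3 + 1) * v x := by
  have hsum := hG.drg.sum_sphereSum v x
  simp only [hG.drg.sum_eq_zero_of_ne_valency hv hG.second.2.1.ne, Finset.sum_range_succ,
    Finset.sum_range_zero, sphereSum_zero hG.drg.connected, sphereSum_one, hv, Pi.smul_apply,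
    smul_eq_mul, hG.sphereSum_two_eq_zero hv x] at hsum
  linear_combination hsum

theorem b_zero_eq (hG : IsShilla G b c a) (hβ : a 3 = a 1 + β) : b 0 = β * a 3 := by
  obtain ⟨v, hv0, hv⟩ := hG.second.1
  obtain ⟨x, hx⟩ := Function.ne_iff.1 hv0
  have hrec := hG.drg.eigenvalue_mul_sphereSum_succ hv x 0
  rw [hG.sphereSum_two_eq_zero hv x, zero_add, sphereSum_zero hG.drg.connected, sphereSum_one, hv,
    Pi.smul_apply, smul_eq_mul] at hrec
  have hβ' : (a 3 : ℝ) = a 1 + β := mod_cast hβ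
  have hb0 : (b 0 : ℝ) = β * a 3 :=
    mul_right_cancel₀ hx (by linear_combination a 3 * v x * hβ' - hrec)
  exact_mod_cast hb0

theorem one_lt_beta (hG : IsShilla G b c a) (hβ : a 3 = a 1 + β) : 1 < β := by
  have hlt : a 3 < b 0 := mod_cast hG.second.2.1
  rw [hG.b_zero_eq hβ] at hlt
  exact lt_of_mul_lt_mul_right ((one_mul (a 3)).trans_lt hlt) (a 3).zero_le

theorem stdSeq_a_three_one (hG : IsShilla G b c a) (hβ : a 3 = a 1 + β) :
    stdSeq b c a (a 3) 1 = 1 / β := by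
  have hb0 : (b 0 : ℝ) ≠ 0 := mod_cast (hG.drg.b_pos three_pos).ne'
  rw [hG.b_zero_eq hβ, Nat.cast_mul] at hb0
  rw [stdSeq_one, hG.b_zero_eq hβ, Nat.cast_mul, div_mul_cancel_right₀ (right_ne_zero_of_mul hb0),
    one_div]

theorem stdSeq_a_three_two (hG : IsShilla G b c a) (hβ : a 3 = a 1 + β) :
    stdSeq b c a (a 3) 2 = 0 := by
  have hβ0 : (β : ℝ) ≠ 0 := mod_cast (one_pos.trans (hG.one_lt_beta hβ)).ne'
  have hβ' : (a 3 : ℝ) - a 1 = β := by rw [hβ]; push_cast; ring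
  rw [stdSeq_two, stdSeq_zero, hG.stdSeq_a_three_one hβ, hG.drg.c_one three_pos, hβ',
    mul_one_div_cancel hβ0, Nat.cast_one, mul_one, sub_self, zero_div]

theorem stdSeq_a_three_three (hG : IsShilla G b c a) (hβ : a 3 = a 1 + β) :
    stdSeq b c a (a 3) 3 = -(c 2 / (β * b 2)) := by
  rw [stdSeq_three, hG.stdSeq_a_three_two hβ, hG.stdSeq_a_three_one hβ]
  field_simp
  ring

theorem c_two_mul_sphereSum_two (hG : IsShilla G b c a) (hβ : a 3 = a 1 + β) {v : V → ℝ}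
    (hv : (G.adjMatrix ℝ).mulVec v = θ • v) (x : V) :
    c 2 * sphereSum G v x 2 = (θ + β) * (θ - a 3) * v x := by
  have hrec := hG.drg.eigenvalue_mul_sphereSum_succ hv x 0
  rw [zero_add, zero_add, sphereSum_zero hG.drg.connected, sphereSum_one, hv, Pi.smul_apply,
    smul_eq_mul, hG.b_zero_eq hβ, Nat.cast_mul] at hrec
  have hβ' : (a 3 : ℝ) = a 1 + β := mod_cast hβ
  linear_combination θ * v x * hβ' - hrec

theorem c_two_mul_sphereSum_three (hG : IsShilla G b c a) (hβ : a 3 = a 1 + β) {v : V → ℝ}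
    (hv : (G.adjMatrix ℝ).mulVec v = θ • v) (hθ : θ ≠ a 3) (x : V) :
    c 2 * sphereSum G v x 3 = b 2 * (θ + β) * v x := by
  refine mul_left_cancel₀ (sub_ne_zero.2 hθ) ?_
  linear_combination c 2 * hG.drg.eigenvalue_sub_mul_sphereSum_diam hv x
    + b 2 * hG.c_two_mul_sphereSum_two hβ hv x

theorem eigenvalue_quadratic (hG : IsShilla G b c a) (hβ : a 3 = a 1 + β) (hθ : IsEig G θ)
    (hlt : θ < a 3) : (θ + β) ^ 2 = (a 3 + β - b 2 - c 2) * (θ + β) + (β - 1) * c 2 := by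
  obtain ⟨v, hv0, hv⟩ := hθ
  obtain ⟨x, hx⟩ := Function.ne_iff.1 hv0
  have hsum := hG.drg.sum_sphereSum v x
  simp only [hG.drg.sum_eq_zero_of_ne_valency hv (hlt.trans hG.second.2.1).ne,
    Finset.sum_range_succ, Finset.sum_range_zero, sphereSum_zero hG.drg.connected, sphereSum_one,
    hv, Pi.smul_apply, smul_eq_mul] at hsum
  refine mul_right_cancel₀ hx ?_
  linear_combination c 2 * hsum - hG.c_two_mul_sphereSum_two hβ hv x
    - hG.c_two_mul_sphereSum_three hβ hv hlt.ne x

theorem eigenvalue_add_eigenvalue (hG : IsShilla G b c a) (hβ : a 3 = a 1 + β) {θ' : ℝ}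
    (hθ : IsEig G θ) (hlt : θ < a 3) (hθ' : IsEig G θ') (hlt' : θ' < a 3) (hne : θ ≠ θ') :
    (θ + β) + (θ' + β) = a 3 + β - b 2 - c 2 := by
  refine mul_left_cancel₀ (sub_ne_zero.2 hne) ?_
  linear_combination hG.eigenvalue_quadratic hβ hθ hlt - hG.eigenvalue_quadratic hβ hθ' hlt'

theorem lt_neg_beta_and_neg_beta_lt (hG : IsShilla G b c a) (hβ : a 3 = a 1 + β) {θ' : ℝ}
    (hθ : IsEig G θ) (hθ' : IsEig G θ') (hlt : θ < θ') (hlt' : θ' < a 3) :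
    θ < -β ∧ -β < θ' := by
  have hsum := hG.eigenvalue_add_eigenvalue hβ hθ (hlt.trans hlt') hθ' hlt' hlt.ne
  have hprod : (θ + β) * (θ' + β) = -((β - 1) * c 2) := by
    linear_combination (θ + β) * hsum - hG.eigenvalue_quadratic hβ hθ (hlt.trans hlt')
  have hβ1 : (1 : ℝ) < β := mod_cast hG.one_lt_beta hβ
  have hneg : (θ + β) * (θ' + β) < 0 := by
    rw [hprod, neg_lt_zero]
    exact mul_pos (sub_pos.2 hβ1) hG.c_two_pos
  rcases mul_neg_iff.1 hneg with ⟨hpos, hneg'⟩ | ⟨hneg', hpos⟩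
  · linarith
  · constructor <;> linarith

theorem krein11_eq_zero_iff (hG : IsShilla G b c a) (hβ : a 3 = a 1 + β) (hθ : IsEig G θ)
    (hlt : θ < a 3) {n m : ℕ} (hn : n ≠ 0) (hm : m ≠ 0) :
    krein11 n m b c a (a 3) θ = 0 ↔ (θ + β) * (b 2 + c 2) = -(β * (β - 1) * b 2) := by
  obtain ⟨v, hv0, hv⟩ := hθ
  obtain ⟨x, hx⟩ := Function.ne_iff.1 hv0
  have hβ0 : (β : ℝ) ≠ 0 := mod_cast (one_pos.trans (hG.one_lt_beta hβ)).ne'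
  have hb2 := hG.b_two_pos.ne'
  have hsum : (β ^ 2 * b 2) * ∑ l ∈ range 4, stdSeq b c a (a 3) l ^ 2 * sphereSum G v x l =
      ((θ + β) * (b 2 + c 2) + β * (β - 1) * b 2) * v x := by
    simp only [Finset.sum_range_succ, Finset.sum_range_zero, stdSeq_zero,
      hG.stdSeq_a_three_one hβ, hG.stdSeq_a_three_two hβ, hG.stdSeq_a_three_three hβ,
      sphereSum_zero hG.drg.connected, sphereSum_one, hv, Pi.smul_apply, smul_eq_mul]
    field_simp
    linear_combination c 2 * hG.c_two_mul_sphereSum_three hβ hv hlt.ne x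
  calc krein11 n m b c a (a 3) θ = 0
      ↔ krein11 n m b c a (a 3) θ * v x = 0 := (mul_eq_zero_iff_right hx).symm
    _ ↔ ∑ l ∈ range 4, stdSeq b c a (a 3) l ^ 2 * sphereSum G v x l = 0 := by
        rw [hG.drg.krein11_mul hv, mul_eq_zero_iff_left (by positivity)]
    _ ↔ ((θ + β) * (b 2 + c 2) + β * (β - 1) * b 2) * v x = 0 := by
        rw [← hsum, mul_eq_zero_iff_left (by positivity)]
    _ ↔ (θ + β) * (b 2 + c 2) = -(β * (β - 1) * b 2) := by
        rw [mul_eq_zero_iff_right hx, add_eq_zero_iff_eq_neg]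

theorem add_beta_mul_eq_of_isQPolyTheta1 (hG : IsShilla G b c a) (hβ : a 3 = a 1 + β) {θ2 θ3 : ℝ}
    (h2 : IsEig G θ2) (h3 : IsEig G θ3) (h32 : θ3 < θ2) (h2a : θ2 < a 3)
    (hQ : IsQPolyTheta1 (Fintype.card V) (eigMult G (a 3 : ℝ)) b c a (a 3) θ2 θ3) :
    (θ3 + β) * (b 2 + c 2) = -(β * (β - 1) * b 2) := by
  have hm := (eigMult_pos hG.second.1).ne'
  have hn : Fintype.card V ≠ 0 := by
    obtain ⟨x, -, -⟩ := hG.drg.exists_diam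
    exact (Fintype.card_pos_iff.2 ⟨x⟩).ne'
  rcases hQ with hq2 | hq3
  · rw [hG.krein11_eq_zero_iff hβ h2 h2a hn hm] at hq2
    have hθ2 : 0 < θ2 + β := by linarith [(hG.lt_neg_beta_and_neg_beta_lt hβ h3 h2 h32 h2a).2]
    have hβ1 : (0 : ℝ) < β - 1 := sub_pos.2 (mod_cast hG.one_lt_beta hβ)
    have hb2 := hG.b_two_pos
    have hc2 := hG.c_two_pos
    have hleft : 0 < (θ2 + β) * (b 2 + c 2) := by positivity
    have hright : 0 ≤ β * (β - 1) * (b 2 : ℝ) := by positivity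
    linarith
  · exact (hG.krein11_eq_zero_iff hβ h3 (h32.trans h2a) hn hm).1 hq3

theorem exists_intCast_eq_of_isEig (hG : IsShilla G b c a) (hβ : a 3 = a 1 + β) {z : ℤ}
    (hz : IsEig G z) (hlt : z < (a 3 : ℝ)) (hθ : IsEig G θ) : ∃ t : ℤ, θ = t := by
  obtain rfl | hk := eq_or_ne θ (b 0)
  · exact ⟨b 0, by simp⟩
  obtain rfl | hlt' := (hG.second.2.2 θ hθ hk).eq_or_lt
  · exact ⟨a 3, by simp⟩
  obtain rfl | hne := eq_or_ne θ z
  · exact ⟨z, rfl⟩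
  refine ⟨a 3 - β - b 2 - c 2 - z, ?_⟩
  push_cast
  linear_combination hG.eigenvalue_add_eigenvalue hβ hθ hlt' hz hlt hne

theorem add_card_sphere_inter_sphere_three_mul_c_two (hG : IsShilla G b c a)
    (hβ : a 3 = a 1 + β) {x y : V} (hxy : G.dist x y = 3) :
    (a 3 + 1 + #{w | G.dist x w = 3 ∧ G.dist y w = 3}) * (c 2 : ℝ) = (β + a 3) * b 2 := by
  have hβ0 : (β : ℝ) ≠ 0 := mod_cast (one_pos.trans (hG.one_lt_beta hβ)).ne'
  have hb2 := hG.b_two_pos.ne'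
  have heigen := hG.drg.adjMatrix_mulVec_stdSeq (θ := a 3)
    (by rw [hG.stdSeq_a_three_two hβ, mul_zero, add_zero]) y
  have hsum := hG.sphereSum_three_eq heigen x
  have hcard0 := hG.drg.card_sphere_inter_sphere_zero x y
  have hcard1 := hG.drg.card_sphere_inter_sphere_one x y
  rw [hxy] at hcard0 hcard1
  rw [hG.drg.sphereSum_comp_dist] at hsum
  simp only [Finset.sum_range_succ, Finset.sum_range_zero, hcard0, hcard1, dist_comm.trans hxy,
    stdSeq_zero, hG.stdSeq_a_three_one hβ, hG.stdSeq_a_three_two hβ,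
    hG.stdSeq_a_three_three hβ] at hsum
  field_simp at hsum
  push_cast at hsum
  linear_combination -hsum

theorem beta_add_one_mul_c_two_le (hG : IsShilla G b c a) (hβ : a 3 = a 1 + β) :
    ((β : ℝ) + 1) * c 2 ≤ 2 * β * b 2 := by
  obtain ⟨x, y, hxy⟩ := hG.drg.exists_diam
  have hb2 := hG.b_two_pos
  have hp333 : (a 3 + 1) * (c 2 : ℝ) ≤ (β + a 3) * b 2 := by
    rw [← hG.add_card_sphere_inter_sphere_three_mul_c_two hβ hxy]
    exact mul_le_mul_of_nonneg_right (le_add_of_nonneg_right (Nat.cast_nonneg _)) hG.c_two_pos.le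
  have hβ1 : (0 : ℝ) ≤ β - 1 := sub_nonneg.2 (mod_cast (hG.one_lt_beta hβ).le)
  have haβ : (0 : ℝ) ≤ a 3 - β := sub_nonneg.2 (mod_cast hβ ▸ Nat.le_add_left β (a 1))
  refine le_of_mul_le_mul_left ?_ (by positivity : (0 : ℝ) < a 3 + 1)
  calc (a 3 + 1) * ((β + 1) * (c 2 : ℝ))
      = (β + 1) * ((a 3 + 1) * c 2) := by ring
    _ ≤ (β + 1) * ((β + a 3) * b 2) := by gcongr
    _ ≤ (β + 1) * ((β + a 3) * b 2) + (β - 1) * (a 3 - β) * b 2 :=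
        le_add_of_nonneg_right (by positivity)
    _ = (a 3 + 1) * (2 * β * b 2) := by ring

theorem neg_sq_lt_of_add_beta_mul (hG : IsShilla G b c a) (hβ : a 3 = a 1 + β)
    (hθ : (θ + β) * (b 2 + c 2) = -(β * (β - 1) * b 2)) : -(β : ℝ) ^ 2 < θ := by
  have hβ1 : (0 : ℝ) < β - 1 := sub_pos.2 (mod_cast hG.one_lt_beta hβ)
  have hβ0 : (0 : ℝ) < β := by linarith
  have hb2 := hG.b_two_pos
  have hc2 := hG.c_two_pos
  refine lt_of_mul_lt_mul_right (a := (b 2 : ℝ) + c 2) ?_ (by positivity)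
  have hgap : 0 < β * (β - 1) * (c 2 : ℝ) := by positivity
  linear_combination hgap - hθ

theorem le_div_of_add_beta_mul (hG : IsShilla G b c a) (hβ : a 3 = a 1 + β)
    (hθ : (θ + β) * (b 2 + c 2) = -(β * (β - 1) * b 2)) :
    θ ≤ -((β : ℝ) ^ 2 * ((β : ℝ) + 3)) / (3 * (β : ℝ) + 1) := by
  have hβ1 : (0 : ℝ) ≤ β - 1 := sub_nonneg.2 (mod_cast (hG.one_lt_beta hβ).le)
  have hb2 := hG.b_two_pos
  have hc2 := hG.c_two_pos
  have hle := mul_le_mul_of_nonneg_left (hG.beta_add_one_mul_c_two_le hβ)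
    (by positivity : (0 : ℝ) ≤ β * (β - 1))
  rw [le_div_iff₀ (by positivity)]
  refine le_of_mul_le_mul_right (a := (b 2 : ℝ) + c 2) ?_ (by positivity)
  linear_combination hle + (3 * β + 1) * hθ

end IsShilla

/-- For a Shilla distance-regular graph with `b = b(Γ)` that is `Q`-polynomial with
respect to `θ₁ = a₃`: `θ₃ = -b - b(b-1)b₂/(b₂+c₂)`; all eigenvalues are integral;
`b₂ + c₂ ∣ b(b-1)b₂`; and `-b² + 1 ≤ θ₃ ≤ -b²(b+3)/(3b+1)`. -/
theorem stmt16 {V : Type*} [Fintype V] [DecidableEq V] (G : SimpleGraph V)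
    [DecidableRel G.Adj] (b c a : ℕ → ℕ) (hG : IsShilla G b c a)
    (β : ℕ) (hβ2 : 2 ≤ β) (hβ : a 3 = a 1 + β)
    (θ2 θ3 : ℝ) (h2 : IsEig G θ2) (h3 : IsEig G θ3)
    (h32 : θ3 < θ2) (h2a : θ2 < (a 3 : ℝ))
    (hall : ∀ θ : ℝ, IsEig G θ → θ = (b 0 : ℝ) ∨ θ = (a 3 : ℝ) ∨ θ = θ2 ∨ θ = θ3)
    (n : ℕ) (hn : Fintype.card V = n) (m1 : ℕ) (hm1 : eigMult G ((a 3 : ℝ)) = m1)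
    (hQ : IsQPolyTheta1 n m1 b c a ((a 3 : ℝ)) θ2 θ3) :
    θ3 = -(β : ℝ) - (β : ℝ) * ((β : ℝ) - 1) * b 2 / ((b 2 : ℝ) + c 2) ∧
    (∀ θ : ℝ, IsEig G θ → ∃ z : ℤ, θ = (z : ℝ)) ∧
    (b 2 + c 2) ∣ β * (β - 1) * b 2 ∧
    -(β : ℝ) ^ 2 + 1 ≤ θ3 ∧ θ3 ≤ -((β : ℝ) ^ 2 * ((β : ℝ) + 3)) / (3 * (β : ℝ) + 1) := by
  subst hn hm1
  have hkey := hG.add_beta_mul_eq_of_isQPolyTheta1 hβ h2 h3 h32 h2a hQ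
  have hquad := hG.eigenvalue_quadratic hβ h3 (h32.trans h2a)
  have hs : (b 2 : ℝ) + c 2 ≠ 0 := (add_pos hG.b_two_pos hG.c_two_pos).ne'
  have hβ1 := (hG.one_lt_beta hβ).le
  obtain ⟨z, hz⟩ : ∃ z : ℤ, θ3 + β = z := by
    refine exists_intCast_eq_of_sq_eq (m := b 2 + c 2) (n := -(β * (β - 1) * b 2))
      (p := a 3 + β - b 2 - c 2) (q := (β - 1) * c 2) (mod_cast hs) ?_ (mod_cast hquad)
    push_cast
    rw [mul_comm, hkey]
  obtain rfl : θ3 = (z - β : ℤ) := by push_cast; linear_combination hz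
  refine ⟨?_, fun θ hθ => hG.exists_intCast_eq_of_isEig hβ h3 (h32.trans h2a) hθ, ?_, ?_,
    hG.le_div_of_add_beta_mul hβ hkey⟩
  · field_simp
    linear_combination hkey
  · rw [← Int.natCast_dvd_natCast, ← dvd_neg]
    refine ⟨z, ?_⟩
    rw [hz, mul_comm] at hkey
    push_cast [Nat.cast_sub hβ1]
    exact_mod_cast hkey.symm
  · exact_mod_cast hG.neg_sq_lt_of_add_beta_mul hβ hkey
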